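/- Fix a real number σ ≥ 3 and an integer n ≥ 3, and place four candidates on the real line at y_1 = −σ+2, y_2 = 0, y_3 = 1, y_4 = 2 (so the ratio of the maximum to the minimum pairwise candidate distance equals σ). Then every strategy-proof randomized two-winner scv mechanism f for these four candidates and n voters has distortion at least (1/12)·min{n, √σ} on this candidate configuration. -/

import Mathlib

open Finset

/-- Cost of a point `z` when the pair of candidates `(y k, y l)` is elected:
the distance to the closer of the two winners. -/
noncomputable def pairCost {α : Type*} [PseudoMetricSpace α] {m : ℕ}
    (y : Fin m → α) (k l : Fin m) (z : α) : ℝ :=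
  min (dist z (y k)) (dist z (y l))

/-- Social cost of the pair `(y k, y l)` on the location profile `x`. -/
noncomputable def socialCost {α : Type*} [PseudoMetricSpace α] {m n : ℕ}
    (y : Fin m → α) (k l : Fin m) (x : Fin n → α) : ℝ :=
  ∑ i, pairCost y k l (x i)

/-- Optimal social cost over all pairs of distinct candidates. -/
noncomputable def OPT {α : Type*} [PseudoMetricSpace α] {m n : ℕ}
    (y : Fin m → α) (x : Fin n → α) : ℝ :=
  sInf {c : ℝ | ∃ k l : Fin m, k ≠ l ∧ c = socialCost y k l x}

/-- A location profile `x` is consistent with an action profile `a` if every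
voter votes for (one of) her nearest candidate(s). -/
def Consistent {α : Type*} [PseudoMetricSpace α] {m n : ℕ}
    (y : Fin m → α) (a : Fin n → Fin m) (x : Fin n → α) : Prop :=
  ∀ (i : Fin n) (k : Fin m), dist (x i) (y (a i)) ≤ dist (x i) (y k)

/-- `f` is a randomized two-winner mechanism: on every action profile it gives a
probability distribution over unordered pairs of distinct candidates
(represented by a symmetric nonnegative function vanishing on the diagonal whose
values over the pairs `k < l` sum to one). -/
def IsRandMech {m n : ℕ} (f : (Fin n → Fin m) → Fin m → Fin m → ℝ) : Prop :=
  ∀ a : Fin n → Fin m, (∀ k l, 0 ≤ f a k l) ∧ (∀ k l, f a k l = f a l k) ∧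
    (∀ k, f a k k = 0) ∧
    ∑ p ∈ univ.filter (fun p : Fin m × Fin m => p.1 < p.2), f a p.1 p.2 = 1

/-- Expected cost of the point `z` under the lottery `f a`. -/
noncomputable def expCost {α : Type*} [PseudoMetricSpace α] {m n : ℕ}
    (y : Fin m → α) (f : (Fin n → Fin m) → Fin m → Fin m → ℝ)
    (a : Fin n → Fin m) (z : α) : ℝ :=
  ∑ p ∈ univ.filter (fun p : Fin m × Fin m => p.1 < p.2),
    f a p.1 p.2 * pairCost y p.1 p.2 z

/-- Expected social cost of the randomized mechanism `f` on action profile `a`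
and location profile `x`. -/
noncomputable def expSC {α : Type*} [PseudoMetricSpace α] {m n : ℕ}
    (y : Fin m → α) (f : (Fin n → Fin m) → Fin m → Fin m → ℝ)
    (a : Fin n → Fin m) (x : Fin n → α) : ℝ :=
  ∑ p ∈ univ.filter (fun p : Fin m × Fin m => p.1 < p.2),
    f a p.1 p.2 * socialCost y p.1 p.2 x

/-- Strategy-proofness of a randomized two-winner mechanism: voting for a
nearest candidate always minimizes a voter's expected cost, whatever the
other voters do. -/
def RandSP {α : Type*} [PseudoMetricSpace α] {m n : ℕ}
    (y : Fin m → α) (f : (Fin n → Fin m) → Fin m → Fin m → ℝ) : Prop :=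
  ∀ (i : Fin n) (xi : α) (a : Fin n → Fin m) (astar ai' : Fin m),
    (∀ k, dist xi (y astar) ≤ dist xi (y k)) →
    expCost y f (Function.update a i astar) xi ≤
      expCost y f (Function.update a i ai') xi

/-
Take a voter `i₀`, a bloc `S` of about `M / 6` voters at `1`, where `M = min n √σ`, and all
remaining voters at `2`. If `i₀` sits at the far candidate `-σ + 2`, the pair `(1, 2)` costs
`σ - 1`, while `(-σ + 2, 2)` costs only `#S`; so electing `(1, 2)` with probability at least `1 / 2`
gives distortion at least `(σ - 1) / (2 #S)`. If `i₀` sits at `0`, the pair `(1, 2)` costs `1`,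
while every other pair costs at least `#S`; so electing `(1, 2)` with probability at most `1 / 2`
gives distortion at least `#S / 2`. Strategy-proofness at the midpoint of `-σ + 2` and `0`, for
which all pairs but `(1, 2)` are equally good, forces the probability of `(1, 2)` to be no smaller
in the first situation than in the second, so one of the two bounds applies.
-/

section Cost

variable {α : Type*} [PseudoMetricSpace α] {m n : ℕ} {y : Fin m → α} {a : Fin n → Fin m}
  {j k l : Fin m} {δ : ℝ}

lemma pairCost_nonneg (y : Fin m → α) (k l : Fin m) (z : α) : 0 ≤ pairCost y k l z :=
  le_min dist_nonneg dist_nonneg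

lemma socialCost_nonneg (y : Fin m → α) (k l : Fin m) (x : Fin n → α) : 0 ≤ socialCost y k l x :=
  sum_nonneg fun _ _ => pairCost_nonneg y k l _

lemma pairCost_le_socialCost (y : Fin m → α) (k l : Fin m) (x : Fin n → α) (i : Fin n) :
    pairCost y k l (x i) ≤ socialCost y k l x :=
  single_le_sum (f := fun i => pairCost y k l (x i)) (fun _ _ => pairCost_nonneg y k l _)
    (mem_univ i)

lemma OPT_le_socialCost (y : Fin m → α) (x : Fin n → α) (hkl : k ≠ l) :
    OPT y x ≤ socialCost y k l x := by
  refine csInf_le ⟨0, ?_⟩ ⟨k, l, hkl, rfl⟩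
  rintro _ ⟨p, q, -, rfl⟩
  exact socialCost_nonneg y p q x

lemma consistent_comp (y : Fin m → α) (a : Fin n → Fin m) : Consistent y a (y ∘ a) :=
  fun i _ => (dist_self (y (a i))).trans_le dist_nonneg

lemma le_pairCost_of_ne (hδ : Pairwise fun j l => δ ≤ dist (y j) (y l)) (hk : j ≠ k) (hl : j ≠ l) :
    δ ≤ pairCost y k l (y j) :=
  le_min (hδ hk) (hδ hl)

lemma card_mul_le_socialCost (hδ : Pairwise fun j l => δ ≤ dist (y j) (y l)) (hk : j ≠ k)
    (hl : j ≠ l) : (#{i | a i = j} : ℝ) * δ ≤ socialCost y k l (y ∘ a) := by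
  have bloc_cost : (#{i | a i = j} : ℝ) * δ ≤ ∑ i with a i = j, pairCost y k l (y (a i)) := by
    rw [← nsmul_eq_mul]
    refine card_nsmul_le_sum _ _ _ fun i hi => ?_
    rw [(mem_filter.mp hi).2]
    exact le_pairCost_of_ne hδ hk hl
  exact bloc_cost.trans <| sum_le_univ_sum_of_nonneg fun _ => pairCost_nonneg y k l _

lemma socialCost_comp_eq_card_mul (ha : ∀ i, a i = j ∨ a i = k ∨ a i = l) :
    socialCost y k l (y ∘ a) = #{i | a i = j} * pairCost y k l (y j) := by
  have cost_eq (i : Fin n) :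
      pairCost y k l ((y ∘ a) i) = if a i = j then pairCost y k l (y j) else 0 := by
    split_ifs with h
    · rw [Function.comp_apply, h]
    · rcases (ha i).resolve_left h with h | h <;> simp [pairCost, h]
  simp only [socialCost, cost_eq, ← sum_filter, sum_const, nsmul_eq_mul]

lemma le_OPT_comp (hδ : Pairwise fun j l => δ ≤ dist (y j) (y l)) (ha : 2 < #(univ.image a)) :
    δ ≤ OPT y (y ∘ a) := by
  obtain ⟨j, l, -, -, -, -, hjl, -⟩ := two_lt_card_iff.mp ha
  refine le_csInf ⟨_, j, l, hjl, rfl⟩ ?_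
  rintro _ ⟨p, q, -, rfl⟩
  obtain ⟨_, h_voted, h_lost⟩ := exists_mem_notMem_of_card_lt_card (card_le_two.trans_lt ha :
    #{p, q} < #(univ.image a))
  obtain ⟨i, -, rfl⟩ := mem_image.mp h_voted
  simp only [mem_insert, mem_singleton, not_or] at h_lost
  exact (le_pairCost_of_ne hδ h_lost.1 h_lost.2).trans (pairCost_le_socialCost y p q (y ∘ a) i)

end Cost

section Lottery

variable {α : Type*} [PseudoMetricSpace α] {m n : ℕ} {y : Fin m → α}
  {f : (Fin n → Fin m) → Fin m → Fin m → ℝ} {a : Fin n → Fin m} {k l : Fin m}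

/-- The ratio of expected to optimal social cost when the votes are `a` and every voter sits exactly
at the candidate she votes for. Meaningful only if `OPT y (y ∘ a) ≠ 0`. -/
noncomputable def colocatedRatio (y : Fin m → α) (f : (Fin n → Fin m) → Fin m → Fin m → ℝ)
    (a : Fin n → Fin m) : ℝ :=
  expSC y f a (y ∘ a) / OPT y (y ∘ a)

namespace IsRandMech

lemma sum_erase (hf : IsRandMech f) (a : Fin n → Fin m) (hkl : k < l) :
    ∑ p ∈ (univ.filter fun p : Fin m × Fin m => p.1 < p.2).erase (k, l), f a p.1 p.2 =
      1 - f a k l := by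
  rw [eq_sub_iff_add_eq', ← (hf a).2.2.2]
  exact add_sum_erase _ (fun p : Fin m × Fin m => f a p.1 p.2)
    (mem_filter.mpr ⟨mem_univ (k, l), hkl⟩)

lemma add_mul_le_expSC (hf : IsRandMech f) (hkl : k < l) {x : Fin n → α} {c : ℝ}
    (hc : ∀ p q, p < q → (p, q) ≠ (k, l) → c ≤ socialCost y p q x) :
    f a k l * socialCost y k l x + (1 - f a k l) * c ≤ expSC y f a x := by
  rw [expSC, ← add_sum_erase _ _ (mem_filter.mpr ⟨mem_univ (k, l), hkl⟩), ← hf.sum_erase a hkl,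
    sum_mul]
  gcongr with p hp
  · exact (hf a).1 p.1 p.2
  · obtain ⟨hp_ne, hp_mem⟩ := mem_erase.mp hp
    exact hc p.1 p.2 (mem_filter.mp hp_mem).2 hp_ne

lemma expCost_eq_add_mul (hf : IsRandMech f) (hkl : k < l) {z : α} {r : ℝ}
    (hr : ∀ p q, p < q → (p, q) ≠ (k, l) → pairCost y p q z = r) :
    expCost y f a z = r + f a k l * (pairCost y k l z - r) := by
  have other_pairs : ∑ p ∈ (univ.filter fun p : Fin m × Fin m => p.1 < p.2).erase (k, l),
      f a p.1 p.2 * pairCost y p.1 p.2 z = (1 - f a k l) * r := by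
    rw [← hf.sum_erase a hkl, sum_mul]
    refine sum_congr rfl fun p hp => ?_
    obtain ⟨hp_ne, hp_mem⟩ := mem_erase.mp hp
    rw [hr p.1 p.2 (mem_filter.mp hp_mem).2 hp_ne]
  rw [expCost, ← add_sum_erase _ _ (mem_filter.mpr ⟨mem_univ (k, l), hkl⟩), other_pairs]
  ring

lemma div_socialCost_le_colocatedRatio (hf : IsRandMech f) {t : ℝ} (hOPT : 0 < OPT y (y ∘ a))
    (hkl : k ≠ l) (ht : t ≤ expSC y f a (y ∘ a)) :
    t / socialCost y k l (y ∘ a) ≤ colocatedRatio y f a :=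
  div_le_div₀ (sum_nonneg fun _ _ => mul_nonneg ((hf a).1 _ _) (socialCost_nonneg y _ _ _)) ht hOPT
    (OPT_le_socialCost y _ hkl)

end IsRandMech

lemma RandSP.prob_update_le (hsp : RandSP y f) (hf : IsRandMech f) (hkl : k < l) {z : α} {w : Fin m}
    (hw : ∀ j, dist z (y w) ≤ dist z (y j)) {r : ℝ}
    (hr : ∀ p q, p < q → (p, q) ≠ (k, l) → pairCost y p q z = r) (hrz : r < pairCost y k l z)
    (i : Fin n) (a : Fin n → Fin m) (u : Fin m) :
    f (Function.update a i w) k l ≤ f (Function.update a i u) k l := by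
  have truthful := hsp i z a w u hw
  rw [hf.expCost_eq_add_mul hkl hr, hf.expCost_eq_add_mul hkl hr] at truthful
  exact le_of_mul_le_mul_right (le_of_add_le_add_left truthful) (sub_pos.mpr hrz)

end Lottery

section Bloc

variable {ι κ : Type*} [DecidableEq ι]

/-- The action profile in which the bloc `S` votes for `k` and everybody else votes for `l`, except
that `i₀` deviates and votes for `v`. Writing it as a `Function.update` makes two such profiles that
differ in `v` directly comparable by strategy-proofness. -/
def blocProfile (S : Finset ι) (k l : κ) (i₀ : ι) (v : κ) : ι → κ :=
  Function.update (fun i => if i ∈ S then k else l) i₀ v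

variable {S : Finset ι} {k l v : κ} {i₀ : ι}

lemma blocProfile_eq_or (S : Finset ι) (k l : κ) (i₀ : ι) (v : κ) (i : ι) :
    blocProfile S k l i₀ v i = v ∨ blocProfile S k l i₀ v i = k ∨ blocProfile S k l i₀ v i = l := by
  rw [blocProfile, Function.update_apply]
  split_ifs <;> simp

variable [Fintype ι] [DecidableEq κ]

lemma filter_blocProfile_eq_singleton (hk : v ≠ k) (hl : v ≠ l) :
    ({i | blocProfile S k l i₀ v i = v} : Finset ι) = {i₀} := by
  ext i
  by_cases hi : i = i₀ <;> by_cases hS : i ∈ S <;>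
    simp [blocProfile, Function.update_apply, hi, hS, hk.symm, hl.symm]

lemma filter_blocProfile_eq_bloc (hkl : k ≠ l) (hk : v ≠ k) (hi₀ : i₀ ∉ S) :
    ({i | blocProfile S k l i₀ v i = k} : Finset ι) = S := by
  ext i
  by_cases hi : i = i₀ <;> by_cases hS : i ∈ S <;>
    simp_all [blocProfile, Function.update_apply, hkl.symm]

lemma filter_blocProfile_eq_compl (hkl : k ≠ l) (hl : v ≠ l) :
    ({i | blocProfile S k l i₀ v i = l} : Finset ι) = (insert i₀ S)ᶜ := by
  ext i
  by_cases hi : i = i₀ <;> by_cases hS : i ∈ S <;>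
    simp [blocProfile, Function.update_apply, hi, hS, hkl, hl]

lemma card_le_card_filter_blocProfile (hkl : k ≠ l) (hl : v ≠ l) (hi₀ : i₀ ∉ S)
    (hn : 2 * #S + 1 ≤ Fintype.card ι) : #S ≤ #{i | blocProfile S k l i₀ v i = l} := by
  rw [filter_blocProfile_eq_compl hkl hl, card_compl, card_insert_of_notMem hi₀]
  omega

lemma two_lt_card_image_blocProfile (hkl : k ≠ l) (hk : v ≠ k) (hl : v ≠ l) (hi₀ : i₀ ∉ S)
    (hS : S.Nonempty) (hn : 2 * #S + 1 ≤ Fintype.card ι) :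
    2 < #(univ.image (blocProfile S k l i₀ v)) := by
  have mem_image_of_card_pos {j : κ} (h : 0 < #{i | blocProfile S k l i₀ v i = j}) :
      j ∈ univ.image (blocProfile S k l i₀ v) := by
    obtain ⟨i, hi⟩ := card_pos.mp h
    exact mem_image.mpr ⟨i, mem_univ i, (mem_filter.mp hi).2⟩
  refine two_lt_card_iff.mpr ⟨v, k, l, ?_, ?_, ?_, hk, hl, hkl⟩ <;> apply mem_image_of_card_pos
  · simp [filter_blocProfile_eq_singleton hk hl]
  · rwa [filter_blocProfile_eq_bloc hkl hk hi₀, card_pos]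
  · exact hS.card_pos.trans_le (card_le_card_filter_blocProfile hkl hl hi₀ hn)

end Bloc

section BlocDistortion

variable {α : Type*} [PseudoMetricSpace α] {m n : ℕ} {y : Fin m → α}
  {f : (Fin n → Fin m) → Fin m → Fin m → ℝ} {k l v : Fin m} {δ : ℝ} {S : Finset (Fin n)}
  {i₀ : Fin n}

lemma OPT_blocProfile_pos (hδ : 0 < δ) (hy : Pairwise fun j l => δ ≤ dist (y j) (y l)) (hkl : k ≠ l)
    (hk : v ≠ k) (hl : v ≠ l) (hi₀ : i₀ ∉ S) (hS : S.Nonempty) (hn : 2 * #S + 1 ≤ n) :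
    0 < OPT y (y ∘ blocProfile S k l i₀ v) :=
  hδ.trans_le <| le_OPT_comp hy <|
    two_lt_card_image_blocProfile hkl hk hl hi₀ hS (by rwa [Fintype.card_fin])

lemma socialCost_blocProfile (hk : v ≠ k) (hl : v ≠ l) :
    socialCost y k l (y ∘ blocProfile S k l i₀ v) = pairCost y k l (y v) := by
  rw [socialCost_comp_eq_card_mul (blocProfile_eq_or S k l i₀ v),
    filter_blocProfile_eq_singleton hk hl, card_singleton, Nat.cast_one, one_mul]

lemma socialCost_blocProfile_deviation (hkl : k ≠ l) (hk : v ≠ k) (hi₀ : i₀ ∉ S) :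
    socialCost y v l (y ∘ blocProfile S k l i₀ v) = #S * pairCost y v l (y k) := by
  rw [socialCost_comp_eq_card_mul fun i => or_left_comm.mp (blocProfile_eq_or S k l i₀ v i),
    filter_blocProfile_eq_bloc hkl hk hi₀]

lemma IsRandMech.prob_mul_div_le_colocatedRatio (hf : IsRandMech f) (hδ : 0 < δ)
    (hy : Pairwise fun j l => δ ≤ dist (y j) (y l)) (hkl : k < l) (hk : v ≠ k) (hl : v ≠ l)
    (hi₀ : i₀ ∉ S) (hS : S.Nonempty) (hn : 2 * #S + 1 ≤ n) :
    f (blocProfile S k l i₀ v) k l * pairCost y k l (y v) / (#S * pairCost y v l (y k)) ≤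
      colocatedRatio y f (blocProfile S k l i₀ v) := by
  rw [← socialCost_blocProfile (S := S) (i₀ := i₀) hk hl,
    ← socialCost_blocProfile_deviation hkl.ne hk hi₀]
  refine hf.div_socialCost_le_colocatedRatio (OPT_blocProfile_pos hδ hy hkl.ne hk hl hi₀ hS hn)
    hl ?_
  simpa using hf.add_mul_le_expSC hkl fun p q _ _ => socialCost_nonneg y p q _

lemma card_mul_le_socialCost_blocProfile (hδ : 0 ≤ δ)
    (hy : Pairwise fun j l => δ ≤ dist (y j) (y l)) (hkl : k < l) (hk : v ≠ k) (hl : v ≠ l)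
    (hi₀ : i₀ ∉ S) (hn : 2 * #S + 1 ≤ n) {p q : Fin m} (hpq : p < q) (hne : (p, q) ≠ (k, l)) :
    #S * δ ≤ socialCost y p q (y ∘ blocProfile S k l i₀ v) := by
  have bloc_le := (filter_blocProfile_eq_bloc hkl.ne hk hi₀).symm.le
  have rest_le := card_le_card_filter_blocProfile hkl.ne hl hi₀ (by rwa [Fintype.card_fin])
  have missed : k ≠ p ∧ k ≠ q ∨ l ≠ p ∧ l ≠ q := by grind
  rcases missed with ⟨hp, hq⟩ | ⟨hp, hq⟩
  · refine le_trans ?_ (card_mul_le_socialCost hy hp hq)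
    gcongr
  · refine le_trans ?_ (card_mul_le_socialCost hy hp hq)
    gcongr

lemma IsRandMech.one_sub_prob_mul_div_le_colocatedRatio (hf : IsRandMech f) (hδ : 0 < δ)
    (hy : Pairwise fun j l => δ ≤ dist (y j) (y l)) (hkl : k < l) (hk : v ≠ k) (hl : v ≠ l)
    (hi₀ : i₀ ∉ S) (hS : S.Nonempty) (hn : 2 * #S + 1 ≤ n) :
    (1 - f (blocProfile S k l i₀ v) k l) * (#S * δ) / pairCost y k l (y v) ≤
      colocatedRatio y f (blocProfile S k l i₀ v) := by
  rw [← socialCost_blocProfile (S := S) (i₀ := i₀) hk hl]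
  refine hf.div_socialCost_le_colocatedRatio (OPT_blocProfile_pos hδ hy hkl.ne hk hl hi₀ hS hn)
    hkl.ne ?_
  have other_pairs := hf.add_mul_le_expSC (a := blocProfile S k l i₀ v) hkl fun p q =>
    card_mul_le_socialCost_blocProfile hδ.le hy hkl hk hl hi₀ hn
  have prob_kl := mul_nonneg ((hf (blocProfile S k l i₀ v)).1 k l)
    (socialCost_nonneg y k l (y ∘ blocProfile S k l i₀ v))
  linarith

end BlocDistortion

section LineConfig

variable {σ : ℝ}

/-- The candidate configuration of the lower bound: one candidate far to the left of three equally
spaced ones, so that the largest distance `σ` is `σ` times the smallest. -/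
def lineConfig (σ : ℝ) : Fin 4 → ℝ := ![-σ + 2, 0, 1, 2]

lemma one_le_dist_lineConfig (hσ : 3 ≤ σ) :
    Pairwise fun j l => 1 ≤ dist (lineConfig σ j) (lineConfig σ l) := by
  have hlt (j l : Fin 4) (hjl : j < l) : lineConfig σ j + 1 ≤ lineConfig σ l := by
    fin_cases j <;> fin_cases l <;> simp [lineConfig] at hjl ⊢ <;> linarith
  intro j l hjl
  rw [Real.dist_eq, le_abs']
  rcases hjl.lt_or_gt with h | h
  · left; linarith [hlt j l h]
  · right; linarith [hlt l j h]

lemma dist_midpoint_lineConfig (hσ : 2 ≤ σ) (j : Fin 4) :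
    dist (1 - σ / 2) (lineConfig σ j) = σ / 2 - 1 + ![0, 0, 1, 2] j := by
  rw [Real.dist_eq]
  fin_cases j <;>
    simp only [lineConfig, Fin.zero_eta, Fin.mk_one, Fin.reduceFinMk, Matrix.cons_val] <;> grind

lemma RandSP.prob_blocProfile_one_le_prob_blocProfile_zero (hσ : 2 ≤ σ) {n : ℕ}
    {f : (Fin n → Fin 4) → Fin 4 → Fin 4 → ℝ} (hsp : RandSP (lineConfig σ) f) (hf : IsRandMech f)
    (S : Finset (Fin n)) (i₀ : Fin n) :
    f (blocProfile S 2 3 i₀ 1) 2 3 ≤ f (blocProfile S 2 3 i₀ 0) 2 3 := by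
  refine hsp.prob_update_le hf (by decide) (z := 1 - σ / 2) (r := σ / 2 - 1) ?_ ?_ ?_ i₀ _ 0
  · intro j
    fin_cases j <;> simp [dist_midpoint_lineConfig hσ]
  · intro p q hpq hne
    fin_cases p <;> fin_cases q <;> simp_all [pairCost, dist_midpoint_lineConfig hσ]
  · simp [pairCost, dist_midpoint_lineConfig hσ]

variable {n : ℕ} {f : (Fin n → Fin 4) → Fin 4 → Fin 4 → ℝ} {S : Finset (Fin n)} {i₀ : Fin n}

lemma IsRandMech.div_two_mul_card_le_colocatedRatio (hf : IsRandMech f) (hσ : 3 ≤ σ)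
    (hi₀ : i₀ ∉ S) (hS : S.Nonempty) (hn : 2 * #S + 1 ≤ n)
    (hp : 1 / 2 ≤ f (blocProfile S 2 3 i₀ 0) 2 3) :
    (σ - 1) / (2 * #S) ≤ colocatedRatio (lineConfig σ) f (blocProfile S 2 3 i₀ 0) := by
  have cost_far : pairCost (lineConfig σ) 2 3 (lineConfig σ 0) = σ - 1 := by
    simp only [pairCost, lineConfig, Real.dist_eq, Matrix.cons_val]
    grind
  have cost_bloc : pairCost (lineConfig σ) 0 3 (lineConfig σ 2) = 1 := by
    simp only [pairCost, lineConfig, Real.dist_eq, Matrix.cons_val]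
    grind
  have ratio_ge := hf.prob_mul_div_le_colocatedRatio one_pos (one_le_dist_lineConfig hσ) (k := 2)
    (l := 3) (v := 0) (by decide) (by decide) (by decide) hi₀ hS hn
  rw [cost_far, cost_bloc] at ratio_ge
  refine le_trans ?_ ratio_ge
  rw [mul_one, ← div_div]
  gcongr
  linarith [mul_le_mul_of_nonneg_right hp (by linarith : 0 ≤ σ - 1)]

lemma IsRandMech.card_div_two_le_colocatedRatio (hf : IsRandMech f) (hσ : 3 ≤ σ)
    (hi₀ : i₀ ∉ S) (hS : S.Nonempty) (hn : 2 * #S + 1 ≤ n)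
    (hp : f (blocProfile S 2 3 i₀ 1) 2 3 ≤ 1 / 2) :
    #S / 2 ≤ colocatedRatio (lineConfig σ) f (blocProfile S 2 3 i₀ 1) := by
  have cost_near : pairCost (lineConfig σ) 2 3 (lineConfig σ 1) = 1 := by
    simp [pairCost, lineConfig, Real.dist_eq]
  have ratio_ge := hf.one_sub_prob_mul_div_le_colocatedRatio one_pos (one_le_dist_lineConfig hσ)
    (k := 2) (l := 3) (v := 1) (by decide) (by decide) (by decide) hi₀ hS hn
  rw [cost_near, div_one, mul_one] at ratio_ge
  refine le_trans ?_ ratio_ge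
  rw [div_eq_inv_mul]
  gcongr
  linarith

end LineConfig

lemma exists_notMem_bloc {n : ℕ} (hn : 3 ≤ n) {M : ℝ} (hM : 1 ≤ M) (hMn : M ≤ n) :
    ∃ (S : Finset (Fin n)) (i₀ : Fin n), i₀ ∉ S ∧ 2 * #S + 1 ≤ n ∧ M / 6 ≤ #S ∧ #S ≤ 2 * M := by
  have ceil_lt : (⌈M / 6⌉₊ : ℝ) < M / 6 + 1 := Nat.ceil_lt_add_one (by linarith)
  have ceil_lt_nat : 6 * ⌈M / 6⌉₊ < n + 6 := by
    rify
    linarith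
  obtain ⟨S, -, hS⟩ := exists_subset_card_eq (s := (univ : Finset (Fin n))) (n := ⌈M / 6⌉₊)
    (by rw [card_fin]; omega)
  obtain ⟨i₀, -, hi₀⟩ := exists_mem_notMem_of_card_lt_card (s := S) (t := univ)
    (by rw [hS, card_fin]; omega)
  refine ⟨S, i₀, hi₀, ?_, ?_, ?_⟩ <;> rw [hS]
  · omega
  · exact Nat.le_ceil _
  · linarith

/-- Four candidates on the real line at `-σ+2, 0, 1, 2` (`σ ≥ 3`): every
strategy-proof randomized two-winner scv mechanism has distortion at least
`(1/12) · min {n, √σ}` on this configuration. -/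
theorem stmt0 (σ : ℝ) (hσ : 3 ≤ σ) (n : ℕ) (hn : 3 ≤ n)
    (y : Fin 4 → ℝ) (hy : y = ![-σ + 2, 0, 1, 2])
    (f : (Fin n → Fin 4) → Fin 4 → Fin 4 → ℝ)
    (hmech : IsRandMech f) (hsp : RandSP y f) :
    ∃ (a : Fin n → Fin 4) (x : Fin n → ℝ), Consistent y a x ∧
      (1 / 12) * min (n : ℝ) (Real.sqrt σ) ≤ expSC y f a x / OPT y x := by
  obtain rfl : y = lineConfig σ := hy
  set M := min (n : ℝ) (Real.sqrt σ)
  have one_le_M : 1 ≤ M :=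
    le_min (by exact_mod_cast (by omega : 1 ≤ n)) (Real.one_le_sqrt.mpr (by linarith))
  have sq_M_le : M ^ 2 ≤ σ := (Real.le_sqrt' (by linarith)).mp (min_le_right _ _)
  obtain ⟨S, i₀, hi₀, hn_S, le_S, S_le⟩ := exists_notMem_bloc hn one_le_M (min_le_left _ _)
  have hS : S.Nonempty := card_pos.mp (by exact_mod_cast (by linarith : (0 : ℝ) < #S))
  rcases le_total (1 / 2) (f (blocProfile S 2 3 i₀ 0) 2 3) with likely | unlikely
  · refine ⟨_, _, consistent_comp _ (blocProfile S 2 3 i₀ 0),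
      le_trans ?_ (hmech.div_two_mul_card_le_colocatedRatio hσ hi₀ hS hn_S likely)⟩
    rw [le_div_iff₀ (by positivity)]
    calc 1 / 12 * M * (2 * #S) ≤ 1 / 12 * M * (2 * (2 * M)) := by gcongr
      _ ≤ σ - 1 := by linarith
  · have unlikely_near := (hsp.prob_blocProfile_one_le_prob_blocProfile_zero
      (by linarith) hmech S i₀).trans unlikely
    refine ⟨_, _, consistent_comp _ (blocProfile S 2 3 i₀ 1),
      le_trans ?_ (hmech.card_div_two_le_colocatedRatio hσ hi₀ hS hn_S unlikely_near)⟩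
    linarith
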